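/- arXiv:2511.08961 — 2 statements merged into one kernel-verified Lean document; each statement's English description precedes it below -/
import Mathlib

section
/- Let z be a C² solution of -z''(ρ) = (1/4) e^{g(z(ρ)) - ρ} on (ρ₀, ∞) with z(ρ) → ∞ as ρ → ∞, where g satisfies (G1). Then z'(ρ) → 0 as ρ → ∞, z'(ρ) ≥ 0 for large ρ, and z'(ρ) = ∫_ρ^∞ (1/4) e^{g(z(s)) - s} ds. -/
open Real Filter Set MeasureTheory

/-! Since `z'' < 0` and `z → ∞`, the derivative `z'` decreases to some limit `L ≥ 0`, so
`e^{g(z(ρ)) - ρ}` is integrable at infinity. If `L` were positive, the change of variables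
`s = z(ρ)` would make `1 / g(z(ρ))` integrable at infinity as well. But for `ρ ≥ 1` either
`g(z(ρ)) ≥ ρ` or `1 / g(z(ρ)) ≥ 1 / ρ`, so that `1 / ρ ≤ e^{g(z(ρ)) - ρ} + 1 / g(z(ρ))` would be
integrable at infinity. Hence `L = 0`, and the integral formula is the fundamental theorem of
calculus for the derivative of `z`. -/

lemma tendsto_atTop_ciInf_of_antitoneOn_Ioi {α β : Type*} [LinearOrder α] [NoMaxOrder α]
    [ConditionallyCompleteLinearOrder β] [TopologicalSpace β] [OrderTopology β]
    {f : α → β} {a : α} (hf : AntitoneOn f (Ioi a)) (hbdd : BddBelow (f '' Ioi a)) :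
    Tendsto f atTop (nhds (⨅ x : Ioi a, f x)) :=
  tendsto_comp_val_Ioi_atTop.1 <|
    tendsto_atTop_ciInf (antitoneOn_iff_antitone.1 hf) (by rwa [image_eq_range] at hbdd)

lemma antitoneOn_Ioi_of_hasDerivAt_nonpos {f f' : ℝ → ℝ} {a : ℝ}
    (hf : ∀ x ∈ Ioi a, HasDerivAt f (f' x) x) (hf' : ∀ x ∈ Ioi a, f' x ≤ 0) :
    AntitoneOn f (Ioi a) :=
  antitoneOn_of_hasDerivWithinAt_nonpos (convex_Ioi a) (HasDerivAt.continuousOn hf)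
    (fun x hx => (hf x (interior_subset hx)).hasDerivWithinAt)
    fun x hx => hf' x (interior_subset hx)

lemma deriv_nonneg_of_antitoneOn_deriv_of_tendsto_atTop {f : ℝ → ℝ} {a x : ℝ}
    (hf : DifferentiableOn ℝ f (Ioi a)) (hanti : AntitoneOn (deriv f) (Ioi a))
    (hlim : Tendsto f atTop atTop) (hx : x ∈ Ioi a) : 0 ≤ deriv f x := by
  by_contra! hneg
  have hsub : Ici x ⊆ Ioi a := Ici_subset_Ioi.2 hx
  have hfanti : AntitoneOn f (Ici x) :=
    antitoneOn_of_deriv_nonpos (convex_Ici x) (hf.continuousOn.mono hsub)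
      (hf.mono (interior_subset.trans hsub)) fun y hy =>
        (hanti hx (hsub (interior_subset hy)) (interior_subset hy)).trans hneg.le
  obtain ⟨y, hlt, hxy⟩ := ((hlim.eventually_gt_atTop (f x)).and (eventually_ge_atTop x)).exists
  exact (hfanti self_mem_Ici hxy hxy).not_gt hlt

lemma integrableOn_Ici_comp_of_le_deriv {E : Type*} [NormedAddCommGroup E] [NormedSpace ℝ E]
    {f : ℝ → E} {z : ℝ → ℝ} {a c : ℝ} (hc : 0 < c) (hderiv : ∀ x ∈ Ici a, c ≤ deriv z x)
    (hf : IntegrableOn f (Ici (z a))) : IntegrableOn (fun x => f (z x)) (Ici a) := by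
  have hpos : ∀ x ∈ Ici a, 0 < deriv z x := fun x hx => hc.trans_le (hderiv x hx)
  have hdiff : ∀ x ∈ Ici a, DifferentiableAt ℝ z x := fun x hx =>
    differentiableAt_of_deriv_ne_zero (hpos x hx).ne'
  have hmono : MonotoneOn z (Ici a) :=
    (strictMonoOn_of_deriv_pos (convex_Ici a)
      (fun x hx => (hdiff x hx).continuousAt.continuousWithinAt)
      fun x hx => hpos x (interior_subset hx)).monotoneOn
  have hsmul : IntegrableOn (fun x => deriv z x • f (z x)) (Ici a) :=
    (integrableOn_image_iff_integrableOn_deriv_smul_of_monotoneOn measurableSet_Ici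
      (fun x hx => (hdiff x hx).hasDerivAt.hasDerivWithinAt) hmono f).1
      (hf.mono_set (image_subset_iff.2 fun x hx => hmono self_mem_Ici hx hx))
  have hbound : ∀ x ∈ Ici a, ‖(deriv z x)⁻¹‖ ≤ c⁻¹ := fun x hx => by
    rw [norm_inv, norm_of_nonneg (hpos x hx).le]
    exact inv_anti₀ hc (hderiv x hx)
  have hcancel : IntegrableOn (fun x => (deriv z x)⁻¹ • deriv z x • f (z x)) (Ici a) :=
    hsmul.bdd_smul c⁻¹ (measurable_deriv z).inv.aestronglyMeasurable
      (ae_restrict_of_forall_mem measurableSet_Ici hbound)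
  exact hcancel.congr_fun (fun x hx => inv_smul_smul₀ (hpos x hx).ne' _) measurableSet_Ici

lemma inv_le_exp_sub_add_inv {x y : ℝ} (hx : 1 ≤ x) (hy : 0 < y) :
    x⁻¹ ≤ exp (y - x) + y⁻¹ := by
  rcases le_total x y with hxy | hyx
  · have hexp : 1 ≤ exp (y - x) := one_le_exp (sub_nonneg.2 hxy)
    linarith [inv_le_one_of_one_le₀ hx, inv_pos.2 hy]
  · linarith [inv_anti₀ hy hyx, exp_pos (y - x)]

lemma not_integrableOn_Ici_inv_of_integrableOn_exp_sub {h : ℝ → ℝ} {a : ℝ}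
    (hpos : ∀ x ∈ Ici a, 0 < h x) (hexp : IntegrableOn (fun x => exp (h x - x)) (Ici a)) :
    ¬ IntegrableOn (fun x => (h x)⁻¹) (Ici a) := by
  intro hinv
  have hsub : Ici (max a 1) ⊆ Ici a := Ici_subset_Ici.2 (le_max_left a 1)
  refine not_integrableOn_Ici_inv (a := max a 1) <|
    ((hexp.add hinv).mono_set hsub).mono' measurable_inv.aestronglyMeasurable <|
      ae_restrict_of_forall_mem measurableSet_Ici fun x hx => ?_
  have hx1 : 1 ≤ x := (le_max_right a 1).trans hx
  rw [norm_of_nonneg (inv_nonneg.2 (zero_le_one.trans hx1))]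
  exact inv_le_exp_sub_add_inv hx1 (hpos x (hsub hx))

lemma not_integrableOn_Ici_exp_comp_sub_of_le_deriv {g z : ℝ → ℝ} {a c : ℝ} (hc : 0 < c)
    (hderiv : ∀ x ∈ Ici a, c ≤ deriv z x) (hgpos : ∀ x ∈ Ici a, 0 < g (z x))
    (hg : IntegrableOn (fun s => (g s)⁻¹) (Ici (z a))) :
    ¬ IntegrableOn (fun x => exp (g (z x) - x)) (Ici a) := fun hexp =>
  not_integrableOn_Ici_inv_of_integrableOn_exp_sub hgpos hexp
    (integrableOn_Ici_comp_of_le_deriv (f := fun s => (g s)⁻¹) hc hderiv hg)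

lemma tendsto_deriv_nhds_zero_of_hasDerivAt_neg_exp {g z : ℝ → ℝ} {ρ₀ c : ℝ} (hc : 0 < c)
    (hgpos : ∀ᶠ s in atTop, 0 < g s) (hg : IntegrableAtFilter (fun s => (g s)⁻¹) atTop)
    (hz : Tendsto z atTop atTop) (hnonneg : ∀ ρ ∈ Ioi ρ₀, 0 ≤ deriv z ρ)
    (hderiv : ∀ ρ ∈ Ioi ρ₀, HasDerivAt (deriv z) (-(c * exp (g (z ρ) - ρ))) ρ) :
    Tendsto (deriv z) atTop (nhds 0) := by
  have hbdd : BddBelow (deriv z '' Ioi ρ₀) := ⟨0, forall_mem_image.2 hnonneg⟩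
  have hlim : Tendsto (deriv z) atTop (nhds (⨅ ρ : Ioi ρ₀, deriv z ρ)) :=
    tendsto_atTop_ciInf_of_antitoneOn_Ioi
      (antitoneOn_Ioi_of_hasDerivAt_nonpos hderiv fun ρ _ => neg_nonpos.2 (by positivity)) hbdd
  set L := ⨅ ρ : Ioi ρ₀, deriv z ρ
  have hL_le : ∀ ρ ∈ Ioi ρ₀, L ≤ deriv z ρ := fun ρ hρ =>
    ciInf_le (by rwa [image_eq_range] at hbdd) (⟨ρ, hρ⟩ : Ioi ρ₀)
  have hL_nonneg : 0 ≤ L := le_ciInf fun ρ => hnonneg ρ ρ.2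
  obtain ⟨s, hs⟩ := integrableAtFilter_atTop_iff.1 hg
  obtain ⟨a, ha⟩ := eventually_atTop.1 <|
    (eventually_gt_atTop ρ₀).and <| (hz.eventually hgpos).and <| hz.eventually_ge_atTop s
  have hint : IntegrableOn (fun ρ => -(c * exp (g (z ρ) - ρ))) (Ioi a) :=
    integrableOn_Ioi_deriv_of_nonpos' (fun ρ hρ => hderiv ρ (ha ρ hρ).1)
      (fun ρ _ => neg_nonpos.2 (by positivity)) hlim
  have hexp : IntegrableOn (fun ρ => exp (g (z ρ) - ρ)) (Ici a) := by
    rw [integrableOn_Ici_iff_integrableOn_Ioi]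
    simpa [IntegrableOn, hc.ne'] using hint.neg.const_mul c⁻¹
  have hL : L = 0 := by
    by_contra hL_ne
    exact not_integrableOn_Ici_exp_comp_sub_of_le_deriv (hL_nonneg.lt_of_ne' hL_ne)
      (fun ρ hρ => hL_le ρ (ha ρ hρ).1) (fun ρ hρ => (ha ρ hρ).2.1)
      (hs.mono_set (Ici_subset_Ici.2 (ha a le_rfl).2.2)) hexp
  rwa [hL] at hlim

theorem stmt_12_general {g z : ℝ → ℝ} {ρ₀ c : ℝ} (hc : 0 < c)
    (hgpos : ∀ᶠ s in atTop, 0 < g s)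
    (hg : IntegrableAtFilter (fun s => (g s)⁻¹) atTop)
    (hz : DifferentiableOn ℝ z (Ioi ρ₀))
    (hzeq : ∀ ρ ∈ Ioi ρ₀, -(deriv (deriv z) ρ) = c * exp (g (z ρ) - ρ))
    (hzinf : Tendsto z atTop atTop) :
    Tendsto (deriv z) atTop (nhds 0) ∧
    (∀ ρ ∈ Ioi ρ₀, 0 ≤ deriv z ρ) ∧
    (∀ ρ ∈ Ioi ρ₀, deriv z ρ = ∫ s in Ici ρ, c * exp (g (z s) - s)) := by
  have hderiv : ∀ ρ ∈ Ioi ρ₀, HasDerivAt (deriv z) (-(c * exp (g (z ρ) - ρ))) ρ := fun ρ hρ => by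
    have hne : deriv (deriv z) ρ ≠ 0 :=
      neg_ne_zero.1 (hzeq ρ hρ ▸ (mul_pos hc (exp_pos _)).ne')
    rw [← hzeq ρ hρ, neg_neg]
    exact (differentiableAt_of_deriv_ne_zero hne).hasDerivAt
  have hanti : AntitoneOn (deriv z) (Ioi ρ₀) :=
    antitoneOn_Ioi_of_hasDerivAt_nonpos hderiv fun ρ _ => neg_nonpos.2 (by positivity)
  have hnonneg : ∀ ρ ∈ Ioi ρ₀, 0 ≤ deriv z ρ := fun ρ hρ =>
    deriv_nonneg_of_antitoneOn_deriv_of_tendsto_atTop hz hanti hzinf hρ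
  have htend : Tendsto (deriv z) atTop (nhds 0) :=
    tendsto_deriv_nhds_zero_of_hasDerivAt_neg_exp hc hgpos hg hzinf hnonneg hderiv
  refine ⟨htend, hnonneg, fun ρ hρ => ?_⟩
  have hFTC : ∫ s in Ioi ρ, -(c * exp (g (z s) - s)) = 0 - deriv z ρ :=
    integral_Ioi_of_hasDerivAt_of_nonpos' (fun s hs => hderiv s (Ici_subset_Ioi.2 hρ hs))
      (fun s _ => neg_nonpos.2 (by positivity)) htend
  rw [integral_neg] at hFTC
  rw [integral_Ici_eq_integral_Ioi]
  linarith

/-- If z is a C² singular solution of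
-z'' = (1/4) e^{g(z)-ρ} on (ρ₀,∞) with z(ρ) → ∞, and g satisfies (G1),
then z'(ρ) → 0, z' ≥ 0 for large ρ, and z'(ρ) = ∫_ρ^∞ (1/4)e^{g(z(s))-s} ds. -/
theorem stmt_12 (g z : ℝ → ℝ) (s₀ ρ₀ q : ℝ) (hq : 1 ≤ q)
    (hC2 : ContDiffOn ℝ 2 g (Ici s₀))
    (hgpos : ∀ s ∈ Ici s₀, 0 < g s)
    (hint : ∀ᶠ s in atTop, IntegrableOn (fun u => 1 / g u) (Ici s))
    (hlim : Tendsto (fun s => g s * deriv (deriv g) s / (deriv g s) ^ 2)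
      atTop (nhds (1 / q)))
    (hz : ContDiffOn ℝ 2 z (Ioi ρ₀))
    (hzeq : ∀ ρ ∈ Ioi ρ₀,
      -(deriv (deriv z) ρ) = (1 / 4) * Real.exp (g (z ρ) - ρ))
    (hzinf : Tendsto z atTop atTop) :
    Tendsto (deriv z) atTop (nhds 0) ∧
    (∀ᶠ ρ in atTop, 0 ≤ deriv z ρ) ∧
    (∀ ρ ∈ Ioi ρ₀,
      deriv z ρ = ∫ s in Ici ρ, (1 / 4) * Real.exp (g (z s) - s)) := by
  have hg : IntegrableAtFilter (fun u => (g u)⁻¹) atTop := by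
    simpa only [one_div] using integrableAtFilter_atTop_iff.2 hint.exists
  obtain ⟨htend, hnonneg, hintegral⟩ := stmt_12_general (by norm_num)
    ((eventually_ge_atTop s₀).mono hgpos) hg (hz.differentiableOn two_ne_zero) hzeq hzinf
  exact ⟨htend, (eventually_gt_atTop ρ₀).mono hnonneg, hintegral⟩
end

section
/- (Hardy-type inequality on the unit disk) Let R ≥ 1. For every Lipschitz function φ with compact support in the unit ball B₁ ⊂ ℝ², one has (1/4)∫_{B₁} φ(x)² / (|x|² (log(R/|x|))²) dx ≤ ∫_{B₁} |∇φ(x)|² dx. -/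
open Real Filter Set MeasureTheory Metric

/-!
Along a ray, write `g r = φ (r • u)` and `L r = log (R / r)`. Since `(1 / L)' = 1 / (r L²)`,
completing the square gives
`r g'² - g² / (4 r L²) + (g² / L)' / 2 = (r g' + g / (2 L))² / r ≥ 0`,
and integrating over `(a, b)` with `g b = 0` leaves a boundary term `-g(a)² / (2 L(a))` of the
good sign. In polar coordinates the Jacobian `r ^ (n - 1)` turns the weight `‖x‖ ^ (-n)` into
`1 / r`, so the one-dimensional inequality can be integrated over the sphere in every dimension `n`;
the case `n = 2` is the one in which the gradient carries no weight.
-/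

open Module (finrank)
open scoped ENNReal

section OneDimensional

variable {R a b r : ℝ} {g : ℝ → ℝ}

theorem hasDerivAt_inv_log_div (hL : log (R / r) ≠ 0) :
    HasDerivAt (fun t ↦ (log (R / t))⁻¹) (1 / (r * log (R / r) ^ 2)) r := by
  have hRr : R / r ≠ 0 := by rintro h; simp [h] at hL
  obtain ⟨hR, hr⟩ := div_ne_zero_iff.1 hRr
  have h := (((hasDerivAt_const r R).fun_div (hasDerivAt_id' r) hr).log hRr).inv hL
  refine h.congr_deriv ?_
  field_simp
  ring

theorem log_div_pos (hr : 0 < r) (hrR : r < R) : 0 < log (R / r) :=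
  log_pos ((one_lt_div hr).2 hrR)

theorem absolutelyContinuousOnInterval_inv_log_div (ha : 0 < a) (hab : a ≤ b) (hb : b < R) :
    AbsolutelyContinuousOnInterval (fun t ↦ (log (R / t))⁻¹) a b := by
  refine ContDiffOn.absolutelyContinuousOnInterval fun r hr ↦ ContDiffAt.contDiffWithinAt ?_
  rw [uIcc_of_le hab] at hr
  have hr₀ : 0 < r := ha.trans_le hr.1
  have hrR : r < R := hr.2.trans_lt hb
  have hRr : R / r ≠ 0 := (div_pos (hr₀.trans hrR) hr₀).ne'
  exact ((contDiffAt_const.div contDiffAt_id hr₀.ne').log hRr).inv (log_div_pos hr₀ hrR).ne'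

theorem quarter_sq_div_le_add_half_deriv (hr : 0 < r) (hL : log (R / r) ≠ 0)
    (hg : DifferentiableAt ℝ g r) :
    1 / 4 * (g r ^ 2 / (r * log (R / r) ^ 2)) ≤
      r * deriv g r ^ 2 + 1 / 2 * deriv (fun t ↦ g t * g t * (log (R / t))⁻¹) r := by
  rw [((hg.hasDerivAt.fun_mul hg.hasDerivAt).fun_mul (hasDerivAt_inv_log_div hL)).deriv,
    ← sub_nonneg]
  calc 0 ≤ (r * deriv g r + g r * (log (R / r))⁻¹ / 2) ^ 2 / r := by positivity
    _ = _ := by field_simp; ring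

theorem continuousOn_sq_div_mul_log_sq {s : Set ℝ} (hg : ContinuousOn g s) (hs : s ⊆ Ioo 0 R) :
    ContinuousOn (fun r ↦ g r ^ 2 / (r * log (R / r) ^ 2)) s := by
  have hne : ∀ r ∈ s, r ≠ 0 := fun r hr ↦ (hs hr).1.ne'
  have hlog : ContinuousOn (fun r ↦ log (R / r)) s :=
    (continuousOn_const.div continuousOn_id hne).log fun r hr ↦
      (div_pos ((hs hr).1.trans (hs hr).2) (hs hr).1).ne'
  exact (hg.pow 2).div (continuousOn_id.mul (hlog.pow 2)) fun r hr ↦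
    mul_ne_zero (hne r hr) (pow_ne_zero 2 (log_div_pos (hs hr).1 (hs hr).2).ne')

theorem intervalIntegral_hardy_log (ha : 0 < a) (hab : a ≤ b) (hb : b < R)
    (hg : AbsolutelyContinuousOnInterval g a b) (hgb : g b = 0)
    (hint : IntervalIntegrable (fun r ↦ r * deriv g r ^ 2) volume a b) :
    ∫ r in a..b, 1 / 4 * (g r ^ 2 / (r * log (R / r) ^ 2)) ≤ ∫ r in a..b, r * deriv g r ^ 2 := by
  have hsub : uIcc a b ⊆ Ioo 0 R :=
    uIcc_of_le hab ▸ fun r hr ↦ ⟨ha.trans_le hr.1, hr.2.trans_lt hb⟩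
  let F : ℝ → ℝ := fun r ↦ g r * g r * (log (R / r))⁻¹
  have hF : AbsolutelyContinuousOnInterval F a b :=
    (hg.fun_mul hg).fun_mul (absolutelyContinuousOnInterval_inv_log_div ha hab hb)
  have hF' : IntervalIntegrable (fun r ↦ 1 / 2 * deriv F r) volume a b :=
    hF.intervalIntegrable_deriv.const_mul _
  have hFa : 0 ≤ F a :=
    mul_nonneg (mul_self_nonneg _) (inv_nonneg.2 (log_div_pos ha (hab.trans_lt hb)).le)
  calc ∫ r in a..b, 1 / 4 * (g r ^ 2 / (r * log (R / r) ^ 2))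
      ≤ ∫ r in a..b, (r * deriv g r ^ 2 + 1 / 2 * deriv F r) := by
        refine intervalIntegral.integral_mono_ae_restrict hab
          ((continuousOn_sq_div_mul_log_sq hg.continuousOn hsub).const_smul
            (1 / 4 : ℝ)).intervalIntegrable (hint.add hF') ?_
        rw [EventuallyLE, ae_restrict_iff' measurableSet_Icc]
        filter_upwards [hg.ae_differentiableAt] with r hgr hr
        rw [← uIcc_of_le hab] at hr
        have hr' := hsub hr
        exact quarter_sq_div_le_add_half_deriv hr'.1 (log_div_pos hr'.1 hr'.2).ne' (hgr hr)
    _ = (∫ r in a..b, r * deriv g r ^ 2) - 1 / 2 * F a := by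
        have hFb : F b = 0 := by simp [F, hgb]
        rw [intervalIntegral.integral_add hint hF', intervalIntegral.integral_const_mul,
          hF.integral_deriv_eq_sub, hFb]
        ring
    _ ≤ ∫ r in a..b, r * deriv g r ^ 2 := by linarith

theorem setLIntegral_Ioc_hardy_log (ha : 0 < a) (hb : b < R)
    (hg : AbsolutelyContinuousOnInterval g a b) (hgb : g b = 0) :
    ∫⁻ r in Ioc a b, ENNReal.ofReal (1 / 4 * (g r ^ 2 / (r * log (R / r) ^ 2))) ≤
      ∫⁻ r in Ioc a b, ENNReal.ofReal (r * deriv g r ^ 2) := by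
  rcases lt_or_ge b a with hba | hab
  · simp [Ioc_eq_empty_of_le hba.le]
  have hpos : ∀ᵐ r ∂volume.restrict (Ioc a b), 0 < r :=
    (ae_restrict_mem measurableSet_Ioc).mono fun r hr ↦ ha.trans hr.1
  have hright : 0 ≤ᵐ[volume.restrict (Ioc a b)] fun r ↦ r * deriv g r ^ 2 :=
    hpos.mono fun r hr ↦ by positivity
  have hleft : 0 ≤ᵐ[volume.restrict (Ioc a b)]
      fun r ↦ 1 / 4 * (g r ^ 2 / (r * log (R / r) ^ 2)) := hpos.mono fun r hr ↦ by positivity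
  by_cases hint : IntegrableOn (fun r ↦ r * deriv g r ^ 2) (Ioc a b)
  · have hcont : ContinuousOn (fun r ↦ 1 / 4 * (g r ^ 2 / (r * log (R / r) ^ 2))) (Icc a b) :=
      (continuousOn_sq_div_mul_log_sq (uIcc_of_le hab ▸ hg.continuousOn) fun r hr ↦
        ⟨ha.trans_le hr.1, hr.2.trans_lt hb⟩).const_smul (1 / 4 : ℝ)
    have hle := intervalIntegral_hardy_log ha hab hb hg hgb
      ((intervalIntegrable_iff_integrableOn_Ioc_of_le hab).2 hint)
    rw [intervalIntegral.integral_of_le hab, intervalIntegral.integral_of_le hab] at hle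
    rw [← ofReal_integral_eq_lintegral_ofReal hint hright, ← ofReal_integral_eq_lintegral_ofReal
      (hcont.integrableOn_Icc.mono_set Ioc_subset_Icc_self) hleft]
    exact ENNReal.ofReal_le_ofReal hle
  · have hmeas : Measurable fun r ↦ r * deriv g r ^ 2 :=
      measurable_id.mul ((measurable_deriv g).pow_const 2)
    rw [IntegrableOn, ← lintegral_ofReal_ne_top_iff_integrable hmeas.aestronglyMeasurable hright,
      not_not] at hint
    exact hint ▸ le_top

theorem setLIntegral_Ioi_hardy_log (hb : b < R)
    (hg : ∀ a, 0 < a → AbsolutelyContinuousOnInterval g a b) (hgb : ∀ r, b ≤ r → g r = 0) :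
    ∫⁻ r in Ioi 0, ENNReal.ofReal (1 / 4 * (g r ^ 2 / (r * log (R / r) ^ 2))) ≤
      ∫⁻ r in Ioi 0, ENNReal.ofReal (r * deriv g r ^ 2) := by
  let f : ℝ → ℝ≥0∞ := fun r ↦ ENNReal.ofReal (1 / 4 * (g r ^ 2 / (r * log (R / r) ^ 2)))
  have htail : ∫⁻ r in Ioi b, f r = 0 :=
    setLIntegral_eq_zero measurableSet_Ioi fun r hr ↦ by simp [f, hgb r (le_of_lt hr)]
  have htruncated (a : ℝ) (ha : 0 < a) :
      ∫⁻ r in Ioi a, f r ≤ ∫⁻ r in Ioi 0, ENNReal.ofReal (r * deriv g r ^ 2) :=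
    calc ∫⁻ r in Ioi a, f r
        ≤ ∫⁻ r in Ioc a b ∪ Ioi b, f r := lintegral_mono_set Ioi_subset_Ioc_union_Ioi
      _ ≤ ∫⁻ r in Ioc a b, f r := by
          simpa only [htail, add_zero] using lintegral_union_le (μ := volume) f (Ioc a b) (Ioi b)
      _ ≤ ∫⁻ r in Ioc a b, ENNReal.ofReal (r * deriv g r ^ 2) :=
          setLIntegral_Ioc_hardy_log ha hb (hg a ha) (hgb b le_rfl)
      _ ≤ ∫⁻ r in Ioi 0, ENNReal.ofReal (r * deriv g r ^ 2) :=
          lintegral_mono_set fun r hr ↦ ha.trans hr.1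
  obtain ⟨a, ha_anti, ha_pos, ha_lim⟩ := exists_seq_strictAnti_tendsto (0 : ℝ)
  calc ∫⁻ r in Ioi 0, f r
      = ⨆ n, ∫⁻ r in Ioi (a n), f r := by
        rw [← (isGLB_of_tendsto_atTop ha_anti.antitone ha_lim).iUnion_Ioi_eq,
          setLIntegral_iUnion_of_directed]
        exact Monotone.directed_le fun m n hmn ↦ Ioi_subset_Ioi (ha_anti.antitone hmn)
    _ ≤ ∫⁻ r in Ioi 0, ENNReal.ofReal (r * deriv g r ^ 2) :=
        iSup_le fun n ↦ htruncated (a n) (ha_pos n)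

end OneDimensional

section Polar

variable {E : Type*} [NormedAddCommGroup E] [NormedSpace ℝ E]

theorem lineDeriv_smul_smul_eq_mul_deriv (φ : E → ℝ) (r : ℝ) (u : E) :
    lineDeriv ℝ φ (r • u) (r • u) = r * deriv (fun t : ℝ ↦ φ (t • u)) r := by
  rw [lineDeriv_smul, smul_eq_mul, lineDeriv]
  simp only [← add_smul]
  rw [deriv_comp_const_add (f := fun t : ℝ ↦ φ (t • u)), add_zero]

variable [MeasurableSpace E] [BorelSpace E] [FiniteDimensional ℝ E]

theorem lintegral_eq_lintegral_toSphere_lintegral_Ioi (μ : Measure E) [μ.IsAddHaarMeasure]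
    [Nontrivial E] {F : E → ℝ≥0∞} (hF : Measurable F) :
    ∫⁻ x, F x ∂μ = ∫⁻ u : sphere (0 : E) 1, (∫⁻ r in Ioi (0 : ℝ),
      ENNReal.ofReal (r ^ (finrank ℝ E - 1)) * F (r • (u : E))) ∂μ.toSphere := by
  have hFr (u : sphere (0 : E) 1) : Measurable fun r : Ioi (0 : ℝ) ↦ F ((r : ℝ) • (u : E)) := by
    fun_prop
  calc ∫⁻ x, F x ∂μ
      = ∫⁻ x : ({0}ᶜ : Set E), F x ∂(μ.comap (↑)) := by
        rw [lintegral_subtype_comap (measurableSet_singleton _).compl, restrict_compl_singleton]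
    _ = ∫⁻ p : sphere (0 : E) 1 × Ioi (0 : ℝ), F ((p.2 : ℝ) • (p.1 : E))
          ∂(μ.toSphere.prod (.volumeIoiPow (finrank ℝ E - 1))) := by
        rw [← μ.measurePreserving_homeomorphUnitSphereProd.lintegral_comp_emb
          (homeomorphUnitSphereProd E).measurableEmbedding]
        refine lintegral_congr fun x ↦ ?_
        rw [← homeomorphUnitSphereProd_symm_apply_coe, Homeomorph.symm_apply_apply]
    _ = ∫⁻ u : sphere (0 : E) 1, (∫⁻ r : Ioi (0 : ℝ), F ((r : ℝ) • (u : E))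
          ∂(.volumeIoiPow (finrank ℝ E - 1))) ∂μ.toSphere :=
        lintegral_prod _ (by fun_prop)
    _ = _ := by
        refine lintegral_congr fun u ↦ ?_
        rw [Measure.volumeIoiPow, lintegral_withDensity_eq_lintegral_mul _ (by fun_prop) (hFr u),
          ← lintegral_subtype_comap measurableSet_Ioi]
        rfl

theorem integrableOn_ball_norm_zpow (μ : Measure E) [μ.IsAddHaarMeasure] [Nontrivial E] {k : ℤ}
    (hk : -(finrank ℝ E : ℤ) < k) (R : ℝ) :
    IntegrableOn (fun x : E ↦ ‖x‖ ^ k) (ball 0 R) μ := by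
  rw [integrableOn_fun_norm_addHaar μ (f := fun y : ℝ ↦ y ^ k)]
  obtain ⟨m, hm⟩ := Int.eq_ofNat_of_zero_le (by lia : 0 ≤ (finrank ℝ E : ℤ) - 1 + k)
  have hdim : 0 < finrank ℝ E := Module.finrank_pos
  have hpow : EqOn (fun y : ℝ ↦ y ^ (finrank ℝ E - 1) • y ^ k) (fun y ↦ y ^ m) (Ioo 0 R) := by
    intro y hy
    simp only [smul_eq_mul]
    rw [← zpow_natCast, ← zpow_add₀ hy.1.ne', Nat.cast_pred hdim, hm, zpow_natCast]
  exact ((continuous_pow m).integrableOn_Icc.mono_set Ioo_subset_Icc_self).congr_fun hpow.symm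
    measurableSet_Ioo

end Polar

section Hardy

variable {E : Type*} [NormedAddCommGroup E] [NormedSpace ℝ E]
  {R b : ℝ} {φ : E → ℝ} {K : NNReal} {u : E}

theorem setLIntegral_Ioi_smul_hardy_log {n : ℕ} (hn : 0 < n) (hφ : LipschitzWith K φ) (hb : b < R)
    (hφb : Function.support φ ⊆ ball 0 b) (hu : ‖u‖ = 1) :
    ∫⁻ r in Ioi (0 : ℝ), ENNReal.ofReal (r ^ (n - 1)) * ENNReal.ofReal
        (1 / 4 * (φ (r • u) ^ 2 / (‖r • u‖ ^ n * log (R / ‖r • u‖) ^ 2))) ≤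
      ∫⁻ r in Ioi (0 : ℝ), ENNReal.ofReal (r ^ (n - 1)) * ENNReal.ofReal
        (lineDeriv ℝ φ (r • u) (r • u) ^ 2 / ‖r • u‖ ^ n) := by
  obtain ⟨m, rfl⟩ := Nat.exists_eq_add_one.2 hn
  have hnorm {r : ℝ} (hr : 0 < r) : ‖r • u‖ = r := by
    rw [norm_smul, hu, mul_one, Real.norm_of_nonneg hr.le]
  have hray (a : ℝ) : AbsolutelyContinuousOnInterval (fun r : ℝ ↦ φ (r • u)) a b :=
    (hφ.comp (ContinuousLinearMap.toSpanSingleton ℝ u).lipschitz).lipschitzOnWith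
      |>.absolutelyContinuousOnInterval
  have hvanish (r : ℝ) (hr : b ≤ r) : φ (r • u) = 0 := by
    refine Function.notMem_support.1 fun hmem ↦ ?_
    have hlt : |r| < b := by simpa [norm_smul, hu] using hφb hmem
    exact hlt.not_ge (hr.trans (le_abs_self r))
  calc _ = ∫⁻ r in Ioi (0 : ℝ),
            ENNReal.ofReal (1 / 4 * (φ (r • u) ^ 2 / (r * log (R / r) ^ 2))) := by
        refine setLIntegral_congr_fun measurableSet_Ioi fun r (hr : 0 < r) ↦ ?_
        rw [← ENNReal.ofReal_mul (by positivity), hnorm hr, Nat.add_sub_cancel]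
        congr 1
        field_simp
        ring
    _ ≤ ∫⁻ r in Ioi (0 : ℝ), ENNReal.ofReal (r * deriv (fun t : ℝ ↦ φ (t • u)) r ^ 2) :=
        setLIntegral_Ioi_hardy_log hb (fun a _ ↦ hray a) hvanish
    _ = _ := by
        refine setLIntegral_congr_fun measurableSet_Ioi fun r (hr : 0 < r) ↦ ?_
        rw [← ENNReal.ofReal_mul (by positivity), hnorm hr, Nat.add_sub_cancel,
          lineDeriv_smul_smul_eq_mul_deriv]
        congr 1
        field_simp
        ring

variable [Nontrivial E] [FiniteDimensional ℝ E] [MeasurableSpace E] [BorelSpace E]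
  (μ : Measure E) [μ.IsAddHaarMeasure]

-- `lineDeriv` is measurable and restricts to `deriv` along rays without any differentiability, so
-- the inequality holds on every ray and Rademacher's theorem is needed only afterwards.
theorem lintegral_hardy_log_lineDeriv (hφ : LipschitzWith K φ) (hsupp : tsupport φ ⊆ ball 0 R) :
    ∫⁻ x, ENNReal.ofReal (1 / 4 * (φ x ^ 2 / (‖x‖ ^ finrank ℝ E * log (R / ‖x‖) ^ 2))) ∂μ ≤
      ∫⁻ x, ENNReal.ofReal (lineDeriv ℝ φ x x ^ 2 / ‖x‖ ^ finrank ℝ E) ∂μ := by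
  obtain ⟨b, hb, hφb⟩ := exists_lt_subset_ball (isClosed_tsupport φ) hsupp
  have hφm : Measurable φ := hφ.continuous.measurable
  have hlineDeriv : Measurable fun x ↦ lineDeriv ℝ φ x x :=
    (measurable_lineDeriv_uncurry hφ.continuous).comp (measurable_id.prodMk measurable_id)
  rw [lintegral_eq_lintegral_toSphere_lintegral_Ioi μ (by fun_prop),
    lintegral_eq_lintegral_toSphere_lintegral_Ioi μ (by fun_prop)]
  exact lintegral_mono fun u ↦ setLIntegral_Ioi_smul_hardy_log Module.finrank_pos hφ hb
    ((subset_tsupport φ).trans hφb) (norm_eq_of_mem_sphere u)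

theorem lintegral_hardy_log (hφ : LipschitzWith K φ) (hsupp : tsupport φ ⊆ ball 0 R) :
    ∫⁻ x, ENNReal.ofReal (1 / 4 * (φ x ^ 2 / (‖x‖ ^ finrank ℝ E * log (R / ‖x‖) ^ 2))) ∂μ ≤
      ∫⁻ x, ENNReal.ofReal (‖x‖ ^ (2 - finrank ℝ E : ℤ) * ‖fderiv ℝ φ x‖ ^ 2) ∂μ := by
  refine (lintegral_hardy_log_lineDeriv μ hφ hsupp).trans (lintegral_mono_ae ?_)
  filter_upwards [hφ.ae_differentiableAt (μ := μ), Measure.ae_ne μ 0] with x hx hx₀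
  refine ENNReal.ofReal_le_ofReal ?_
  have hle : |fderiv ℝ φ x x| ≤ ‖fderiv ℝ φ x‖ * ‖x‖ := (fderiv ℝ φ x).le_opNorm x
  calc lineDeriv ℝ φ x x ^ 2 / ‖x‖ ^ finrank ℝ E
      = |fderiv ℝ φ x x| ^ 2 / ‖x‖ ^ finrank ℝ E := by rw [hx.lineDeriv_eq_fderiv, sq_abs]
    _ ≤ (‖fderiv ℝ φ x‖ * ‖x‖) ^ 2 / ‖x‖ ^ finrank ℝ E := by gcongr
    _ = ‖x‖ ^ (2 - finrank ℝ E : ℤ) * ‖fderiv ℝ φ x‖ ^ 2 := by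
        rw [zpow_sub₀ (norm_ne_zero_iff.2 hx₀), zpow_natCast, zpow_ofNat]
        ring

theorem integrableOn_ball_norm_zpow_mul_norm_fderiv_sq (hφ : LipschitzWith K φ) (R : ℝ) :
    IntegrableOn (fun x ↦ ‖x‖ ^ (2 - finrank ℝ E : ℤ) * ‖fderiv ℝ φ x‖ ^ 2) (ball 0 R) μ := by
  refine (integrableOn_ball_norm_zpow μ (by lia) R).mul_bdd (c := K ^ 2)
    ((measurable_fderiv ℝ φ).norm.pow_const 2).aestronglyMeasurable
    (Eventually.of_forall fun x ↦ ?_)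
  rw [norm_pow, norm_norm]
  gcongr
  exact norm_fderiv_le_of_lipschitz ℝ hφ

theorem stmt_15_general {s : Set E} (hφ : LipschitzWith K φ) (hφs : tsupport φ ⊆ s)
    (hsR : s ⊆ ball 0 R) :
    (1 / 4) * ∫ x in s, φ x ^ 2 / (‖x‖ ^ finrank ℝ E * log (R / ‖x‖) ^ 2) ∂μ ≤
      ∫ x in s, ‖x‖ ^ (2 - finrank ℝ E : ℤ) * ‖fderiv ℝ φ x‖ ^ 2 ∂μ := by
  have hφm : Measurable φ := hφ.continuous.measurable
  have hsupp : tsupport φ ⊆ ball 0 R := hφs.trans hsR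
  have hfderiv {x : E} (hx : x ∉ tsupport φ) : fderiv ℝ φ x = 0 := fderiv_of_notMem_tsupport ℝ hx
  have hint : Integrable (fun x ↦ ‖x‖ ^ (2 - finrank ℝ E : ℤ) * ‖fderiv ℝ φ x‖ ^ 2) μ :=
    (integrableOn_ball_norm_zpow_mul_norm_fderiv_sq μ hφ R).integrable_of_forall_notMem_eq_zero
      fun x hx ↦ by simp [hfderiv fun h ↦ hx (hsupp h)]
  rw [setIntegral_eq_integral_of_forall_compl_eq_zero fun x hx ↦ by
      simp [image_eq_zero_of_notMem_tsupport fun h ↦ hx (hφs h)],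
    setIntegral_eq_integral_of_forall_compl_eq_zero fun x hx ↦ by
      simp [hfderiv fun h ↦ hx (hφs h)],
    ← integral_const_mul,
    integral_eq_lintegral_of_nonneg_ae (Eventually.of_forall fun x ↦ by positivity)
      (Measurable.aestronglyMeasurable (by fun_prop)),
    integral_eq_lintegral_of_nonneg_ae (Eventually.of_forall fun x ↦ by positivity) hint.1]
  exact ENNReal.toReal_mono hint.lintegral_lt_top.ne (lintegral_hardy_log μ hφ hsupp)

end Hardy

/-- Hardy-type inequality on the unit disk: for R ≥ 1 and any
Lipschitz φ with compact support contained in the unit disk B₁ ⊂ ℝ²,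
(1/4)∫_{B₁} φ²/(|x|²(log(R/|x|))²) ≤ ∫_{B₁} |∇φ|². -/
theorem stmt_15 (R : ℝ) (hR : 1 ≤ R)
    (φ : EuclideanSpace ℝ (Fin 2) → ℝ) (K : NNReal)
    (hφ : LipschitzWith K φ)
    (hsupp : tsupport φ ⊆ ball (0 : EuclideanSpace ℝ (Fin 2)) 1) :
    (1 / 4) * ∫ x in ball (0 : EuclideanSpace ℝ (Fin 2)) 1,
        (φ x) ^ 2 / (‖x‖ ^ 2 * (Real.log (R / ‖x‖)) ^ 2) ≤
      ∫ x in ball (0 : EuclideanSpace ℝ (Fin 2)) 1, ‖fderiv ℝ φ x‖ ^ 2 := by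
  simpa using stmt_15_general volume hφ hsupp (ball_subset_ball hR)
end
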